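/- Let φ_{μ,σ}(x) = (1/(σ√(2π))) · exp(−(x − μ)²/(2σ²)) denote the normal density with mean μ and standard deviation σ. Let σ > 0 and μ ≥ 0 satisfy μ + σ ≤ 1. Then for every real number c, ∫_{−|c|}^{|c|} (1 − x²) φ_{0,σ}(x) dx ≥ ∫_{−|c|}^{|c|} (1 − x²) φ_{μ,σ}(x) dx. In words: for normally distributed predictions with fixed variance, against any realization c of the opponent, the ex post expected payoff in the bias-variance game from the zero-bias normal distribution N(0, σ²) is at least that from N(μ, σ²). -/

import Mathlib

/-- The density of the normal distribution with mean `μ` and standard deviation `σ`. -/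
noncomputable def normalPDF (μ σ x : ℝ) : ℝ :=
  (1 / (σ * Real.sqrt (2 * Real.pi))) * Real.exp (-(x - μ)^2 / (2 * σ^2))

/-! On the symmetric interval `[-c, c]` an even payoff sees a density only through its even part.
For `N(μ, σ²)` the even part is the centred density times
`cosh (μ x / σ²) / exp ((μ / σ)² / 2)`, so the difference `g` between the centred density and this
even part is nonnegative for `|x| ≤ t` and nonpositive for `|x| ≥ t`, for some `t ≥ 0`. A payoff
`w |x|` with `w` antitone then satisfies `w t * g x ≤ w |x| * g x` pointwise. Moreover `0 ≤ ∫ g`,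
because the centred density puts at least as much mass on `[-c, c]`, and
`exp (m² / 2) ≤ cosh (m (m + 1))` with `m = |μ| / σ` allows `t ≤ |μ| + σ`, hence `0 ≤ w t` as soon
as `0 ≤ w (|μ| + σ)`. For `w r = 1 - r²` this last condition is `|μ| + σ ≤ 1`. -/

open Real Set MeasureTheory

theorem one_add_sq_div_two_le_cosh (y : ℝ) : 1 + y ^ 2 / 2 ≤ cosh y := by
  have hsinh : (y / 2) ^ 2 ≤ sinh (y / 2) ^ 2 := by
    rw [sq_le_sq, abs_sinh]
    exact self_le_sinh_iff.2 (abs_nonneg _)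
  have hcosh : cosh y = cosh (y / 2) ^ 2 + sinh (y / 2) ^ 2 := by
    rw [← cosh_two_mul, mul_div_cancel₀ y two_ne_zero]
  linarith [cosh_sq (y / 2)]

theorem exp_sq_div_two_le_cosh {m : ℝ} (hm : 0 ≤ m) : exp (m ^ 2 / 2) ≤ cosh (m * (m + 1)) := by
  rcases le_total m 1 with hm1 | hm1
  · have hsmall : |m ^ 2 / 2| ≤ 1 := by
      rw [abs_of_nonneg (by positivity)]
      nlinarith
    have hquartic : m ^ 4 ≤ m ^ 3 := pow_le_pow_of_le_one hm hm1 (by norm_num)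
    calc exp (m ^ 2 / 2) ≤ 1 + m ^ 2 / 2 + (m ^ 2 / 2) ^ 2 := by
          linarith [(abs_le.1 (abs_exp_sub_one_sub_id_le hsmall)).2]
      _ ≤ 1 + (m * (m + 1)) ^ 2 / 2 := by nlinarith [pow_nonneg hm 3, pow_nonneg hm 4]
      _ ≤ cosh (m * (m + 1)) := one_add_sq_div_two_le_cosh _
  · have htwo : 2 ≤ exp (m + m ^ 2 / 2) := by nlinarith [add_one_le_exp (m + m ^ 2 / 2)]
    calc exp (m ^ 2 / 2) ≤ exp (m ^ 2 / 2) * exp (m + m ^ 2 / 2) / 2 := by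
          nlinarith [exp_pos (m ^ 2 / 2)]
      _ = exp (m * (m + 1)) / 2 := by rw [← exp_add]; ring_nf
      _ ≤ cosh (m * (m + 1)) := by
          rw [cosh_eq]
          linarith [exp_pos (-(m * (m + 1)))]

theorem intervalIntegrable_comp_abs_of_antitoneOn {w : ℝ → ℝ} (hw : AntitoneOn w (Ici 0))
    (a b : ℝ) : IntervalIntegrable (fun x ↦ w |x|) volume a b := by
  refine intervalIntegrable_of_even (fun x ↦ by rw [abs_neg]) fun x hx ↦
    AntitoneOn.intervalIntegrable fun y hy z hz hyz ↦ ?_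
  rw [uIcc_of_le hx.le] at hy hz
  rw [abs_of_nonneg hy.1, abs_of_nonneg hz.1]
  exact hw hy.1 hz.1 hyz

theorem integral_comp_abs_sub_le_integral_comp_abs {w : ℝ → ℝ} (hw : AntitoneOn w (Ici 0))
    {c : ℝ} (hc : 0 ≤ c) (μ : ℝ) : ∫ x in (-c)..c, w |x - μ| ≤ ∫ x in (-c)..c, w |x| := by
  wlog hμ : 0 ≤ μ generalizing μ
  · calc ∫ x in (-c)..c, w |x - μ| = ∫ x in (-c)..c, w |-x - μ| := by
          simp [intervalIntegral.integral_comp_neg fun x ↦ w |x - μ|]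
      _ = ∫ x in (-c)..c, w |x - -μ| := by simp only [← neg_add', abs_neg, sub_neg_eq_add]
      _ ≤ ∫ x in (-c)..c, w |x| := this (-μ) (by linarith)
  have hint := intervalIntegrable_comp_abs_of_antitoneOn hw
  have hint_sub (d : ℝ) : IntervalIntegrable (fun s ↦ w |d - s|) volume 0 μ := by
    simpa using (hint (d - 0) (d - μ)).comp_sub_left d
  -- Shifting `[-c, c]` by `-μ` trades `[c - μ, c]` for `[-c - μ, -c]`, which is farther from `0`.
  have hexchange : (∫ x in (-c)..c, w |x|) - ∫ x in (-c)..c, w |x - μ| =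
      (∫ s in 0..μ, w |c - s|) - ∫ s in 0..μ, w |-c - s| := by
    rw [intervalIntegral.integral_comp_sub_right (fun x ↦ w |x|),
      intervalIntegral.integral_comp_sub_left (fun x ↦ w |x|),
      intervalIntegral.integral_comp_sub_left (fun x ↦ w |x|), sub_zero, sub_zero]
    exact intervalIntegral.integral_interval_sub_interval_comm' (hint _ _) (hint _ _) (hint _ _)
  have hfarther : ∫ s in 0..μ, w |-c - s| ≤ ∫ s in 0..μ, w |c - s| := by
    refine intervalIntegral.integral_mono_on hμ (hint_sub _) (hint_sub _) fun s hs ↦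
      hw (mem_Ici.2 (abs_nonneg _)) (mem_Ici.2 (abs_nonneg _)) ?_
    rw [← neg_add', abs_neg, abs_of_nonneg (add_nonneg hc hs.1)]
    exact abs_le.2 ⟨by linarith, by linarith [hs.1]⟩
  linarith

theorem mul_integral_le_integral_mul_of_sign_change {w g : ℝ → ℝ} {t a b : ℝ}
    (hw : AntitoneOn w (Ici 0)) (ht : 0 ≤ t) (hab : a ≤ b) (hg : IntervalIntegrable g volume a b)
    (hwg : IntervalIntegrable (fun x ↦ w |x| * g x) volume a b)
    (hnonneg : ∀ x, |x| ≤ t → 0 ≤ g x) (hnonpos : ∀ x, t ≤ |x| → g x ≤ 0) :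
    w t * ∫ x in a..b, g x ≤ ∫ x in a..b, w |x| * g x := by
  rw [← intervalIntegral.integral_const_mul]
  refine intervalIntegral.integral_mono_on hab (hg.const_mul _) hwg fun x _ ↦ ?_
  rcases le_total |x| t with hxt | hxt
  · exact mul_le_mul_of_nonneg_right (hw (abs_nonneg x) ht hxt) (hnonneg x hxt)
  · exact mul_le_mul_of_nonpos_right (hw ht (abs_nonneg x) hxt) (hnonpos x hxt)

/-- The even part `x ↦ (f x + f (-x)) / 2` of a function. For the density of a random
variable this is the density after multiplication by an independent fair random sign. -/
noncomputable def evenPart (f : ℝ → ℝ) (x : ℝ) : ℝ :=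
  (f x + f (-x)) / 2

theorem continuous_evenPart {f : ℝ → ℝ} (hf : Continuous f) : Continuous (evenPart f) := by
  unfold evenPart
  fun_prop

theorem evenPart_comp_abs_mul (w f : ℝ → ℝ) :
    evenPart (fun x ↦ w |x| * f x) = fun x ↦ w |x| * evenPart f x := by
  funext x
  simp only [evenPart, abs_neg]
  ring

theorem integral_evenPart {f : ℝ → ℝ} {c : ℝ} (hf : IntervalIntegrable f volume (-c) c) :
    ∫ x in (-c)..c, evenPart f x = ∫ x in (-c)..c, f x := by
  have hf_neg : IntervalIntegrable (fun x ↦ f (-x)) volume (-c) c := by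
    simpa using (IntervalIntegrable.iff_comp_neg (by simp)).1 hf.symm
  unfold evenPart
  rw [intervalIntegral.integral_div, intervalIntegral.integral_add hf hf_neg,
    intervalIntegral.integral_comp_neg, neg_neg, add_self_div_two]

theorem continuous_normalPDF (μ σ : ℝ) : Continuous (normalPDF μ σ) := by
  unfold normalPDF
  fun_prop

theorem normalPDF_zero_nonneg {σ : ℝ} (hσ : 0 ≤ σ) (x : ℝ) : 0 ≤ normalPDF 0 σ x := by
  unfold normalPDF
  positivity

theorem normalPDF_eq_normalPDF_zero_abs_sub (μ σ x : ℝ) :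
    normalPDF μ σ x = normalPDF 0 σ |x - μ| := by
  simp only [normalPDF, sub_zero, sq_abs]

theorem antitoneOn_normalPDF_zero {σ : ℝ} (hσ : 0 ≤ σ) : AntitoneOn (normalPDF 0 σ) (Ici 0) := by
  intro x hx y _ hxy
  have hx : 0 ≤ x := hx
  simp only [normalPDF, sub_zero]
  gcongr

theorem integral_normalPDF_le_integral_normalPDF_zero {σ c : ℝ} (hσ : 0 ≤ σ) (hc : 0 ≤ c)
    (μ : ℝ) : ∫ x in (-c)..c, normalPDF μ σ x ≤ ∫ x in (-c)..c, normalPDF 0 σ x := by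
  simpa only [normalPDF_eq_normalPDF_zero_abs_sub μ, normalPDF_eq_normalPDF_zero_abs_sub 0,
    sub_zero, abs_abs] using
    integral_comp_abs_sub_le_integral_comp_abs (antitoneOn_normalPDF_zero hσ) hc μ

theorem evenPart_normalPDF {σ : ℝ} (hσ : σ ≠ 0) (μ x : ℝ) :
    evenPart (normalPDF μ σ) x =
      normalPDF 0 σ x * (cosh (μ / σ ^ 2 * x) / exp ((μ / σ) ^ 2 / 2)) := by
  have hsplit (y : ℝ) : exp (-(y - μ) ^ 2 / (2 * σ ^ 2)) =
      exp (-y ^ 2 / (2 * σ ^ 2)) * exp (μ / σ ^ 2 * y) / exp ((μ / σ) ^ 2 / 2) := by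
    rw [← exp_add, ← exp_sub]
    congr 1
    field_simp
    ring
  simp only [evenPart, normalPDF, hsplit, cosh_eq, neg_sq, mul_neg, sub_zero]
  ring

theorem exists_cosh_eq_exp_sq_div_two {σ : ℝ} (hσ : 0 < σ) (μ : ℝ) :
    ∃ t ∈ Icc 0 (|μ| + σ), cosh (μ / σ ^ 2 * t) = exp ((μ / σ) ^ 2 / 2) := by
  have hcont : Continuous fun t ↦ cosh (μ / σ ^ 2 * t) := by fun_prop
  refine intermediate_value_Icc (by positivity) hcont.continuousOn ⟨?_, ?_⟩
  · rw [mul_zero, cosh_zero]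
    exact one_le_exp (by positivity)
  · calc exp ((μ / σ) ^ 2 / 2) = exp ((|μ| / σ) ^ 2 / 2) := by rw [div_pow, div_pow, sq_abs]
      _ ≤ cosh (|μ| / σ * (|μ| / σ + 1)) := exp_sq_div_two_le_cosh (by positivity)
      _ = cosh |μ / σ ^ 2 * (|μ| + σ)| := by
          rw [abs_mul, abs_div, abs_of_nonneg (sq_nonneg σ),
            abs_of_nonneg (add_nonneg (abs_nonneg μ) hσ.le)]
          congr 1
          field_simp
      _ = cosh (μ / σ ^ 2 * (|μ| + σ)) := cosh_abs _

theorem exists_sign_change_normalPDF_zero_sub_evenPart {σ : ℝ} (hσ : 0 < σ) (μ : ℝ) :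
    ∃ t ∈ Icc 0 (|μ| + σ),
      (∀ x, |x| ≤ t → 0 ≤ normalPDF 0 σ x - evenPart (normalPDF μ σ) x) ∧
        ∀ x, t ≤ |x| → normalPDF 0 σ x - evenPart (normalPDF μ σ) x ≤ 0 := by
  obtain ⟨t, ht, hcosh⟩ := exists_cosh_eq_exp_sq_div_two hσ μ
  have hfactor (x : ℝ) : normalPDF 0 σ x - evenPart (normalPDF μ σ) x =
      normalPDF 0 σ x * (1 - cosh (μ / σ ^ 2 * x) / cosh (μ / σ ^ 2 * t)) := by
    rw [evenPart_normalPDF hσ.ne', hcosh, mul_one_sub]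
  have hmono {x y : ℝ} (hxy : |x| ≤ |y|) : cosh (μ / σ ^ 2 * x) ≤ cosh (μ / σ ^ 2 * y) := by
    rw [cosh_le_cosh, abs_mul, abs_mul]
    gcongr
  refine ⟨t, ht, fun x hx ↦ ?_, fun x hx ↦ ?_⟩ <;> rw [hfactor] <;>
    rw [← abs_of_nonneg ht.1] at hx
  · exact mul_nonneg (normalPDF_zero_nonneg hσ.le x)
      (sub_nonneg.2 (div_le_one_of_le₀ (hmono hx) (cosh_pos _).le))
  · exact mul_nonpos_of_nonneg_of_nonpos (normalPDF_zero_nonneg hσ.le x)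
      (sub_nonpos.2 ((one_le_div (cosh_pos _)).2 (hmono hx)))

theorem lower_bias_normal_fixed_variance_general {w : ℝ → ℝ} (hw : AntitoneOn w (Ici 0))
    {μ σ : ℝ} (hσ : 0 < σ) (hIR : 0 ≤ w (|μ| + σ)) (c : ℝ) :
    ∫ x in (-|c|)..|c|, w |x| * normalPDF μ σ x ≤
      ∫ x in (-|c|)..|c|, w |x| * normalPDF 0 σ x := by
  obtain ⟨t, ht, hnonneg, hnonpos⟩ := exists_sign_change_normalPDF_zero_sub_evenPart hσ μ
  have hint {f : ℝ → ℝ} (hf : Continuous f) : IntervalIntegrable f volume (-|c|) |c| :=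
    hf.intervalIntegrable _ _
  have hw_int {f : ℝ → ℝ} (hf : Continuous f) :
      IntervalIntegrable (fun x ↦ w |x| * f x) volume (-|c|) |c| :=
    (intervalIntegrable_comp_abs_of_antitoneOn hw _ _).mul_continuousOn hf.continuousOn
  have hcont := continuous_normalPDF μ σ
  have hcont₀ := continuous_normalPDF 0 σ
  have hcont_even := continuous_evenPart hcont
  have hpayoff := mul_integral_le_integral_mul_of_sign_change hw ht.1 (neg_le_self (abs_nonneg c))
    (hint (hcont₀.sub hcont_even)) (hw_int (hcont₀.sub hcont_even)) hnonneg hnonpos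
  simp only [Pi.sub_apply, mul_sub] at hpayoff
  rw [intervalIntegral.integral_sub (hint hcont₀) (hint hcont_even), integral_evenPart (hint hcont),
    intervalIntegral.integral_sub (hw_int hcont₀) (hw_int hcont_even), ← evenPart_comp_abs_mul,
    integral_evenPart (hw_int hcont)] at hpayoff
  have hwt : 0 ≤ w t := hIR.trans (hw ht.1 (ht.1.trans ht.2) ht.2)
  have hmass := integral_normalPDF_le_integral_normalPDF_zero hσ.le (abs_nonneg c) μ
  linarith [mul_nonneg hwt (sub_nonneg.2 hmass)]

theorem antitoneOn_one_sub_sq : AntitoneOn (fun r : ℝ ↦ 1 - r ^ 2) (Ici 0) :=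
  fun _ hx _ _ hxy ↦ sub_le_sub_left (pow_le_pow_left₀ hx hxy 2) 1

theorem lower_bias_normal_fixed_variance (μ σ : ℝ) (hσ : 0 < σ) (hμ : 0 ≤ μ)
    (hIR : μ + σ ≤ 1) (c : ℝ) :
    ∫ x in (-|c|)..|c|, (1 - x^2) * normalPDF 0 σ x
      ≥ ∫ x in (-|c|)..|c|, (1 - x^2) * normalPDF μ σ x := by
  have hpayoff : 0 ≤ 1 - (|μ| + σ) ^ 2 := by
    rw [abs_of_nonneg hμ]
    exact sub_nonneg.2 (pow_le_one₀ (add_nonneg hμ hσ.le) hIR)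
  simpa only [sq_abs] using
    lower_bias_normal_fixed_variance_general antitoneOn_one_sub_sq hσ hpayoff c
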